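/- arXiv:math/0504429 — 2 statements merged into one kernel-verified Lean document; each statement's English description precedes it below -/
import Mathlib

section
/- Let V be a set of monomials of degree d in K[x_1,…,x_n]. Define M^0V = V and M^{k+1}V = M(M^kV). If |MV| = |V|^{<n−1>}, then |M^{k+1}V| = |M^kV|^{<n−1>} for every integer k ≥ 0. -/
/-!
Write `h^{<k>}` for `macUp k h`, and let `V` be a finite set of monomials in `m + 2` variables.
Slice `V` along `x₀`: let `V₀` be the set of its `x₀`-free monomials, viewed in `m + 1` variables
(`restr V`), and `V₁ = V : x₀` (`colon V`), so that `|V| = a + b` with `a = |V₁|`, `b = |V₀|`.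
Then

* the `x₀`-free part of `M V` is `M V₀`;
* `M V : x₀ = V₀ ∪ M V₁`, and this set contains both `V` and `M V₁`.

Hence `|M V| ≥ |M V₀| + max (|V|, |M V₁|)`. By induction on the number of variables and on the
exponents of `x₀` (in one variable `|M V| = |V|`), the right-hand side is at least
`b^{<m>} + max (a + b, a^{<m+1>})`. Macaulay's bound `|M V| ≥ |V|^{<m+1>}`
(`macUp_card_le_card_shad`) therefore follows from a numerical fact (`macUp_le_add`): if
`a + b + b^{<m>} < (a + b)^{<m+1>}`, then `(a + b)^{<m+1>} ≤ a^{<m+1>} + b^{<m>}`.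

When the bound is attained, the same dichotomy determines `M² V` (`card_shad_shad_le`). If
`a + b + b^{<m>} = (a + b)^{<m+1>}`, then `M V : x₀ = V` and `V₀` attains its bound, so
`|M² V| = |M² V₀| + |M V|`, and the relation between `a + b` and `b` persists (`macUp_macUp_eq`).
Otherwise `M V : x₀ = M V₁`, both `V₀` and `V₁` attain their bounds, and
`|M² V| = |M² V₀| + |M² V₁|`, which is bounded using `macUp_macUp_add_le`. Persistence follows by
iterating.

Both numerical inequalities are instances of one statement, `Adm.le_add`, about families of
functions `W k` satisfying the block recursion
`W (k + 1) (C(A + k, k + 1) + c) = W (k + 1) (C(A + k, k + 1)) + W k c` of `macUp`. It is applied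
to `W k h = h^{<k>}`, and then to `W k h = (K + 1) h^{<k>} - (h^{<k>})^{<k>}`: if the first
inequality is an equality, the second one becomes an upper bound for the sum of the second
iterates at `a` and `b`. The statement rests on two properties of such families, proved together
by induction on `k`: initial intervals have maximal increments (`Subadd`), and final intervals of
`[0, C(A + k, k)]` have minimal ones (`FinalMin`).
-/

open Finset

/-- `macUp n h` is `h^{<n>}`, computed via the greedy (Macaulay) binomial
representation `h = C(a_n, n) + C(a_{n-1}, n-1) + ⋯` (equivalently
`h = C(h(n)+n, n) + ⋯ + C(h(i)+i, i)` with `h(n) ≥ ⋯ ≥ h(i) ≥ 0`), giving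
`h^{<n>} = C(a_n+1, n) + C(a_{n-1}+1, n-1) + ⋯`; `macUp n 0 = 0`, `macUp 0 1 = 1`. -/
def macUp : ℕ → ℕ → ℕ
  | 0, h => h
  | n+1, h =>
    if h = 0 then 0
    else
      let a := Nat.findGreatest (fun a => Nat.choose a (n+1) ≤ h) (h + n + 1)
      Nat.choose (a+1) (n+1) + macUp n (h - Nat.choose a (n+1))
/-- Monomials in `K[x_1,…,x_n]` are identified with their exponent vectors
`Fin n → ℕ`; the degree of `v` is `∑ i, v i`.  `shad V` is the set
`MV = {x_j v : v ∈ V, 1 ≤ j ≤ n}`. -/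
def shad {n : ℕ} (V : Finset (Fin n → ℕ)) : Finset (Fin n → ℕ) :=
  (Finset.univ ×ˢ V).image fun p => p.2 + Pi.single p.1 1

/-! ### The recursion for `h^{<k>}` -/

/-- The number of monomials of degree `A` in `k + 1` variables. -/
def fullCard (k A : ℕ) : ℕ := (A + k).choose k

/-- For `A ≥ 1`, the least `h` whose representation at level `k + 1` has leading term
`C(A + k, k + 1)`. It equals `fullCard (k + 1) (A - 1)`, the number of monomials of degree `A - 1`
in `k + 2` variables. The numbers `blk k A ≤ h ≤ blk k (A + 1)` form the `A`-th block, and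
`blk k (A + 1) - blk k A = fullCard k A`. -/
def blk (k A : ℕ) : ℕ := (A + k).choose (k + 1)

lemma blk_zero (k : ℕ) : blk k 0 = 0 := by simp [blk]

lemma blk_one (k : ℕ) : blk k 1 = 1 := by simp [blk, Nat.add_comm 1 k]

lemma blk_succ (k A : ℕ) : blk k (A + 1) = blk k A + fullCard k A := by
  have := Nat.choose_succ_succ (A + k) k
  simp only [blk, fullCard]
  rw [show A + 1 + k = (A + k) + 1 by ring]
  simp only [Nat.succ_eq_add_one] at this
  omega

lemma fullCard_succ (k A : ℕ) : fullCard (k + 1) A = blk k (A + 1) := by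
  simp only [blk, fullCard]
  congr 1
  ring

lemma fullCard_pos (k A : ℕ) : 0 < fullCard k A := Nat.choose_pos (by omega)

lemma fullCard_zero_right (k : ℕ) : fullCard k 0 = 1 := by simp [fullCard]

lemma fullCard_mono (k : ℕ) : Monotone (fullCard k) := fun _ _ h =>
  Nat.choose_le_choose _ (by omega)

lemma blk_mono (k : ℕ) : Monotone (blk k) := fun _ _ h =>
  Nat.choose_le_choose _ (by omega)

/-- The leading term of the representation of `h` at level `k + 1`. -/
lemma exists_blk (k h : ℕ) (hh : 0 < h) :
    ∃ A c, 1 ≤ A ∧ c < fullCard k A ∧ h = blk k A + c := by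
  induction h with
  | zero => omega
  | succ h ih =>
    rcases Nat.eq_zero_or_pos h with rfl | hp
    · exact ⟨1, 0, le_rfl, fullCard_pos _ _, by rw [blk_one]⟩
    · obtain ⟨A, c, hA, hc, rfl⟩ := ih hp
      by_cases h1 : c + 1 < fullCard k A
      · exact ⟨A, c + 1, hA, h1, by ring⟩
      · refine ⟨A + 1, 0, by omega, fullCard_pos _ _, ?_⟩
        rw [blk_succ]; omega

lemma macUp_zero_right (k : ℕ) : macUp k 0 = 0 := by
  cases k <;> simp [macUp]

lemma macUp_zero_left (h : ℕ) : macUp 0 h = h := by simp [macUp]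

/-- The greedy choice in the definition of `macUp` picks the leading term of `exists_blk`. -/
lemma macUp_blk_of_lt {k A c : ℕ} (hA : 1 ≤ A) (hc : c < fullCard k A) :
    macUp (k + 1) (blk k A + c) = blk k (A + 1) + macUp k c := by
  have hpos : 0 < blk k A := Nat.choose_pos (by omega)
  have hlin : ∀ B, 1 ≤ B → B ≤ blk k B := by
    intro B hB
    induction B, hB using Nat.le_induction with
    | base => rw [blk_one]
    | succ B hB ih => rw [blk_succ]; have := fullCard_pos k B; omega
  have hfg : Nat.findGreatest (fun a => Nat.choose a (k + 1) ≤ blk k A + c) (blk k A + c + k + 1)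
      = A + k := by
    rw [Nat.findGreatest_eq_iff]
    refine ⟨by have := hlin A hA; omega, fun _ => Nat.le_add_right _ _, ?_⟩
    intro a ha _ hle
    have h1 : blk k (A + 1) ≤ a.choose (k + 1) := Nat.choose_le_choose _ (by omega)
    rw [blk_succ] at h1
    omega
  rw [macUp, if_neg (by omega)]
  simp only [hfg]
  have e1 : (A + k).choose (k + 1) = blk k A := rfl
  have e2 : (A + k + 1).choose (k + 1) = blk k (A + 1) := by
    simp only [blk]; congr 1; ring
  rw [e1, e2, Nat.add_sub_cancel_left]

lemma macUp_blk_self {k A : ℕ} : macUp (k + 1) (blk k A) = if A = 0 then 0 else blk k (A + 1) := by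
  split_ifs with h
  · subst h; rw [blk_zero, macUp_zero_right]
  · have := macUp_blk_of_lt (k := k) (A := A) (c := 0) (by omega) (fullCard_pos _ _)
    simpa [macUp_zero_right] using this

lemma macUp_fullCard (k A : ℕ) : macUp k (fullCard k A) = fullCard k (A + 1) := by
  cases k with
  | zero => simp [fullCard, macUp]
  | succ k => rw [fullCard_succ, fullCard_succ, macUp_blk_self, if_neg (by omega)]

/-- The recursion for `macUp`, also valid at the right end of a block. -/
lemma macUp_blk {k A c : ℕ} (hA : 1 ≤ A) (hc : c ≤ fullCard k A) :
    macUp (k + 1) (blk k A + c) = blk k (A + 1) + macUp k c := by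
  rcases hc.lt_or_eq with h | rfl
  · exact macUp_blk_of_lt hA h
  · rw [← blk_succ, macUp_blk_self, if_neg (by omega), macUp_fullCard, ← blk_succ]

lemma macUp_one (k : ℕ) : macUp k 1 = k + 1 := by
  have := macUp_fullCard k 0
  rw [fullCard_zero_right] at this
  rw [this]
  simp [fullCard, Nat.add_comm 1 k]

lemma macUp_one_left {h : ℕ} (hh : 0 < h) : macUp 1 h = h + 1 := by
  obtain ⟨A, c, hA, hc, rfl⟩ := exists_blk 0 h hh
  rw [macUp_blk hA hc.le, blk_succ, macUp_zero_left]
  simp [fullCard]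
  ring

lemma macUp_lt_succ (k x : ℕ) : macUp k x < macUp k (x + 1) := by
  induction k generalizing x with
  | zero => simp [macUp]
  | succ k ih =>
    rcases Nat.eq_zero_or_pos x with rfl | hx
    · rw [macUp_zero_right, zero_add, macUp_one]; omega
    · obtain ⟨A, c, hA, hc, rfl⟩ := exists_blk k x hx
      rw [add_assoc, macUp_blk hA hc.le, macUp_blk (c := c + 1) hA (by omega)]
      have := ih c
      omega

lemma macUp_strictMono (k : ℕ) : StrictMono (macUp k) := strictMono_nat_of_lt_succ (macUp_lt_succ k)

/-- All increments of `macUp k` are at least `1`, so `h ↦ macUp k h - h` is monotone. -/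
lemma add_macUp_le {k x y : ℕ} (h : x ≤ y) : y + macUp k x ≤ x + macUp k y := by
  induction y, h using Nat.le_induction with
  | base => rfl
  | succ y _ ih => have := macUp_lt_succ k y; omega

/-! ### Functions adapted to the block decomposition -/

/-- A family `W k : ℕ → ℤ` that is computed blockwise, as `macUp` is: the increments of `W (k + 1)`
along the block `A` are those of `W k` starting from `0`. In addition `W 0` is additive and, for
`k ≤ K`, the first increments `W k 1` are nondecreasing in `k`. Values in `ℤ` are needed because
combinations with a negative coefficient occur. -/
structure Adm (K : ℕ) (W : ℕ → ℕ → ℤ) : Prop where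
  zero : ∀ k, W k 0 = 0
  add0 : ∀ x y, W 0 (x + y) = W 0 x + W 0 y
  one : ∀ k < K, W k 1 ≤ W (k + 1) 1
  step : ∀ k A c, 1 ≤ A → c ≤ fullCard k A →
    W (k + 1) (blk k A + c) = W (k + 1) (blk k A) + W k c

lemma adm_macUp (K : ℕ) : Adm K fun k h => (macUp k h : ℤ) where
  zero k := by simp [macUp_zero_right]
  add0 x y := by simp [macUp_zero_left]
  one k _ := by simp [macUp_one]
  step k A c hA hc := by
    rw [macUp_blk hA hc, macUp_blk_self, if_neg (by omega)]; push_cast; rfl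

/-- For `K ≥ 1` the coefficient `K + 1` is the least integer for which the first increments `W k 1`,
which equal `(K + 1) (k + 1) - C(k + 2, 2)`, are nondecreasing up to level `K`. -/
lemma adm_macUp_macUp (K : ℕ) :
    Adm K fun k h => ((K : ℤ) + 1) * macUp k h - macUp k (macUp k h) where
  zero k := by simp [macUp_zero_right]
  add0 x y := by simp only [macUp_zero_left]; push_cast; ring
  one k hk := by
    have key : ∀ k, macUp k (macUp k 1) = (k + 2).choose k := by
      intro k
      have h := macUp_fullCard k 0
      rw [fullCard_zero_right] at h
      rw [h, macUp_fullCard]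
      simp [fullCard, Nat.add_comm]
    have h2 : (k + 1 + 2).choose (k + 1) = (k + 2).choose k + (k + 2) := by
      rw [show k + 1 + 2 = (k + 2) + 1 by ring, Nat.choose_succ_succ]
      congr 1
      exact Nat.choose_succ_self_right (k + 1)
    rw [key, key, h2, macUp_one, macUp_one]
    push_cast
    have : (k : ℤ) < K := by exact_mod_cast hk
    linarith
  step k A c hA hc := by
    have h1 : macUp k c ≤ fullCard k (A + 1) := by
      rw [← macUp_fullCard]; exact (macUp_strictMono k).monotone hc
    rw [macUp_blk hA hc, macUp_blk_self, if_neg (by omega), macUp_blk (by omega) h1,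
      macUp_blk_self, if_neg (by omega)]
    push_cast
    ring

section Adm

variable {K : ℕ} {W : ℕ → ℕ → ℤ}

/-- `W k` is subadditive. When `W k 0 = 0`, this says that among all intervals of a given length
the initial one has the largest increment of `W k`. -/
def Subadd (W : ℕ → ℕ → ℤ) (k : ℕ) : Prop := ∀ x y, W k (x + y) ≤ W k x + W k y

/-- Among all intervals of length `r` in `[0, fullCard k A]`, the final one `[y, y + r]` has the
smallest increment of `W k`. -/
def FinalMin (W : ℕ → ℕ → ℤ) (k : ℕ) : Prop := ∀ A y r z, z + r ≤ fullCard k A →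
  y + r = fullCard k A → W k (fullCard k A) - W k y ≤ W k (z + r) - W k z

/-- An interval that begins at the start of a block at level `k + 1` has at least the increment of
any interval of the same length at level `k`: cut it at the ends of blocks, where each piece is an
initial interval at level `k`, and use subadditivity. -/
lemma Adm.le_block (hW : Adm K W) {k : ℕ} (hk : k < K) (hS : Subadd W k) (p r w : ℕ) :
    W k (w + r) - W k w ≤ W (k + 1) (blk k p + r) - W (k + 1) (blk k p) := by
  induction r using Nat.strong_induction_on generalizing p w with
  | _ r ih =>
    rcases Nat.eq_zero_or_pos r with rfl | hr
    · simp
    have hpiece : ∀ s ≤ fullCard k p, 0 < s →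
        W k (w + s) - W k w ≤ W (k + 1) (blk k p + s) - W (k + 1) (blk k p) := by
      intro s hs hs0
      have h1 := hS w s
      rcases Nat.eq_zero_or_pos p with rfl | hp
      · rw [fullCard_zero_right] at hs
        obtain rfl : s = 1 := by omega
        have h2 := hW.one k hk
        rw [blk_zero, zero_add, hW.zero]
        linarith
      · rw [hW.step k p s hp hs]
        linarith
    by_cases h : r ≤ fullCard k p
    · exact hpiece r h hr
    · obtain ⟨r', rfl⟩ := Nat.exists_eq_add_of_lt (not_le.mp h)
      have hp := fullCard_pos k p
      have h1 := ih (r' + 1) (by omega) (p + 1) (w + fullCard k p)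
      have h2 := hpiece _ le_rfl hp
      rw [blk_succ] at h1
      rw [show w + (fullCard k p + r' + 1) = w + fullCard k p + (r' + 1) by ring,
        show blk k p + (fullCard k p + r' + 1) = blk k p + fullCard k p + (r' + 1) by ring]
      linarith

/-- The minimality of final intervals at level `k + 1`, for lengths `r` not exceeding the last
block of `[0, fullCard (k + 1) A]`. The part of `[z, z + r]` in the block of `z` is compared with
a final interval at level `k`; the rest of it begins at the start of a block, so `Adm.le_block`
applies. -/
lemma Adm.finalMin_succ_aux (hW : Adm K W) {k : ℕ} (hk : k < K) (hS : Subadd W k)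
    (hF : FinalMin W k) {A y r z : ℕ} (hr : r ≤ fullCard k A) (hz : z + r ≤ fullCard (k + 1) A)
    (hy : y + r = fullCard (k + 1) A) :
    W (k + 1) (fullCard (k + 1) A) - W (k + 1) y ≤ W (k + 1) (z + r) - W (k + 1) z := by
  rcases Nat.eq_zero_or_pos r with rfl | hr0
  · simp only [add_zero] at hy ⊢
    simp [hy]
  rcases Nat.eq_zero_or_pos A with rfl | hA
  · rw [fullCard_zero_right] at *
    obtain rfl : r = 1 := by omega
    obtain rfl : y = 0 := by omega
    obtain rfl : z = 0 := by omega
    simp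
  rw [fullCard_succ, blk_succ] at hz hy ⊢
  obtain ⟨s, hs⟩ := Nat.exists_eq_add_of_le hr
  obtain rfl : y = blk k A + s := by omega
  rw [hW.step k A _ hA le_rfl, hW.step k A s hA (by omega)]
  rcases Nat.eq_zero_or_pos z with rfl | hz0
  · have h := hW.le_block hk hS 0 r s
    rw [blk_zero, show s + r = fullCard k A by omega] at h
    linarith
  obtain ⟨p, u, hp, hu, rfl⟩ := exists_blk k z hz0
  have hpA : p ≤ A := by
    by_contra hcon
    have := blk_mono k (show A + 1 ≤ p by omega)
    rw [blk_succ] at this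
    omega
  have hmono := fullCard_mono k hpA
  by_cases hur : u + r ≤ fullCard k p
  · have h := hF A s r u (by omega) (by omega)
    rw [add_assoc, hW.step k p _ hp hur, hW.step k p _ hp hu.le]
    linarith
  · obtain ⟨r1, h1⟩ := Nat.exists_eq_add_of_le hu.le
    obtain ⟨r2, rfl⟩ := Nat.exists_eq_add_of_le (show r1 ≤ r by omega)
    have e1 := hF A (s + r2) r1 u (by omega) (by omega)
    have e2 := hW.le_block hk hS (p + 1) r2 s
    rw [blk_succ, hW.step k p _ hp le_rfl] at e2
    rw [show blk k p + u + (r1 + r2) = blk k p + fullCard k p + r2 by omega,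
      hW.step k p _ hp hu.le]
    rw [← h1] at e1
    linarith

/-- Longer intervals are handled by splitting off the last block. -/
lemma Adm.finalMin_succ (hW : Adm K W) {k : ℕ} (hk : k < K) (hS : Subadd W k)
    (hF : FinalMin W k) : FinalMin W (k + 1) := by
  intro A
  induction A with
  | zero =>
    intro y r z hz hy
    refine hW.finalMin_succ_aux hk hS hF ?_ hz hy
    rw [fullCard_zero_right] at *; omega
  | succ A ih =>
    intro y r z hz hy
    by_cases hr : r ≤ fullCard k (A + 1)
    · exact hW.finalMin_succ_aux hk hS hF hr hz hy
    obtain ⟨r', rfl⟩ := Nat.exists_eq_add_of_le (not_le.mp hr).le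
    have hs : fullCard (k + 1) (A + 1) = fullCard (k + 1) A + fullCard k (A + 1) := by
      rw [fullCard_succ, fullCard_succ, blk_succ]
    have h1 := ih y r' z (by omega) (by omega)
    have h2 := hW.finalMin_succ_aux hk hS hF (A := A + 1) (y := fullCard (k + 1) A)
      (r := fullCard k (A + 1)) (z := z + r') le_rfl (by omega) (by omega)
    rw [show z + (fullCard k (A + 1) + r') = z + r' + fullCard k (A + 1) by ring]
    linarith

/-- Let `blk k q` be the start of the block containing `x + y`, where `x ≤ y`. If `y` lies in that
block, the interval from `y` to `x + y` is one at level `k`. Otherwise `x` exceeds the offset `u`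
of `x + y` in its block, and the part of the interval below `blk k q` is final in `[0, blk k q]`. -/
lemma Adm.subadd_succ (hW : Adm K W) {k : ℕ} (hk : k < K) (hS : Subadd W k)
    (hF : FinalMin W (k + 1)) : Subadd W (k + 1) := by
  intro x y
  wlog hxy : x ≤ y generalizing x y
  · have := this y x (by omega)
    rw [add_comm x y]; linarith
  rcases Nat.eq_zero_or_pos (x + y) with h0 | h0
  · obtain rfl : x = 0 := by omega
    obtain rfl : y = 0 := by omega
    simp [hW.zero]
  obtain ⟨q, u, hq, hu, hqu⟩ := exists_blk k _ h0
  by_cases hy : blk k q ≤ y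
  · obtain ⟨v, rfl⟩ := Nat.exists_eq_add_of_le hy
    have h := hW.le_block hk hS 0 x v
    rw [blk_zero, zero_add, hW.zero] at h
    obtain rfl : u = v + x := by omega
    rw [hqu, hW.step k q _ hq hu.le, hW.step k q v hq (by omega)]
    linarith
  · obtain ⟨r, hr⟩ := Nat.exists_eq_add_of_le (not_le.mp hy).le
    obtain rfl : x = u + r := by omega
    obtain ⟨B, rfl⟩ : ∃ B, q = B + 1 := ⟨q - 1, by omega⟩
    have h1 := hF B y r u (by rw [fullCard_succ]; omega) (by rw [fullCard_succ]; omega)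
    have h2 := hW.le_block hk hS 0 u 0
    rw [blk_zero] at h2
    simp only [zero_add, hW.zero] at h2
    rw [hqu, hW.step k _ u hq hu.le]
    rw [fullCard_succ] at h1
    linarith

lemma Adm.subadd_and_finalMin (hW : Adm K W) {k : ℕ} (hk : k ≤ K) :
    Subadd W k ∧ FinalMin W k := by
  induction k with
  | zero =>
    refine ⟨fun x y => (hW.add0 x y).le, fun A y r z _ hy => ?_⟩
    rw [← hy, hW.add0, hW.add0]
    linarith
  | succ k ih =>
    obtain ⟨hS, hF⟩ := ih (by omega)
    have hF' := hW.finalMin_succ (by omega) hS hF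
    exact ⟨hW.subadd_succ (by omega) hS hF', hF'⟩

end Adm

/-! ### Inequalities between representations -/

/-- In particular, the hypothesis of `Adm.le_add` below excludes `a = 0`. -/
lemma macUp_succ_le (k h : ℕ) : macUp (k + 1) h ≤ h + macUp k h := by
  induction k generalizing h with
  | zero =>
    rcases Nat.eq_zero_or_pos h with rfl | hh
    · simp [macUp_zero_right]
    · rw [macUp_one_left hh, macUp_zero_left]; omega
  | succ k ih =>
    rcases Nat.eq_zero_or_pos h with rfl | hh
    · simp [macUp_zero_right]
    obtain ⟨A, c, hA, hc, rfl⟩ := exists_blk (k + 1) h hh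
    have hW := adm_macUp (k + 1)
    have hB := hW.le_block (Nat.lt_succ_self k) (hW.subadd_and_finalMin (Nat.le_succ k)).1 A c 0
    simp only [zero_add, macUp_zero_right] at hB
    rw [macUp_blk_self, if_neg (by omega)] at hB
    have h1 := ih c
    have h2 : macUp (k + 1) (blk k A + c) ≤ macUp (k + 1) (blk (k + 1) A + c) := by
      apply (macUp_strictMono _).monotone
      obtain ⟨B, rfl⟩ : ∃ B, A = B + 1 := ⟨A - 1, by omega⟩
      rw [blk_succ (k + 1), fullCard_succ]
      omega
    rw [macUp_blk hA hc.le, blk_succ, fullCard_succ]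
    omega

/-- If `c` lies in `[0, fullCard (k + 1) A)`, then a value `b ≥ blk k A` for which
`macUp (k + 1) b - fullCard (k + 1) A` does not exceed `macUp (k + 1) c - c` lies in the block `A`
at level `k + 1`, because `h ↦ macUp (k + 1) h - h` is monotone. -/
lemma blk_remainder {k A c b : ℕ} (hA : 1 ≤ A) (hc : c < fullCard (k + 1) A)
    (hb : blk k A ≤ b) (hle : c + macUp (k + 1) b ≤ fullCard (k + 1) A + macUp (k + 1) c) :
    ∃ e ≤ fullCard k A, b = blk k A + e ∧
      macUp (k + 1) b = fullCard (k + 1) A + macUp k e := by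
  obtain ⟨e, rfl⟩ := Nat.exists_eq_add_of_le hb
  have he : e ≤ fullCard k A := by
    by_contra hcon
    have h1 : macUp (k + 1) (fullCard (k + 1) A) < macUp (k + 1) (blk k A + e) := by
      apply macUp_strictMono
      rw [fullCard_succ, blk_succ]; omega
    have h2 := add_macUp_le (k := k + 1) hc.le
    omega
  exact ⟨e, he, rfl, by rw [macUp_blk hA he, fullCard_succ]⟩

/-- The key inequality for the two slices of a set of monomials. Here `b` is the number of monomials
free of `x₀`, and `a` the number of the others. The hypothesis bounds `b` from above, roughly by the
share of `x₀`-free monomials in a lexicographic set of size `a + b`; without it the inequality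
fails for `W = macUp`. -/
lemma Adm.le_add {K : ℕ} {W : ℕ → ℕ → ℤ} (hW : Adm K W) {k a b : ℕ} (hk : k + 1 ≤ K)
    (hlt : a + b + macUp k b < macUp (k + 1) (a + b)) :
    W (k + 1) (a + b) ≤ W (k + 1) a + W k b := by
  induction k generalizing a b with
  | zero =>
    rcases Nat.eq_zero_or_pos (a + b) with h | h
    · rw [h, macUp_zero_right] at hlt; omega
    · rw [zero_add, macUp_one_left h, macUp_zero_left] at hlt
      obtain rfl : b = 0 := by omega
      simp [hW.zero]
  | succ k ih =>
    have ha : 0 < a := by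
      by_contra hcon
      obtain rfl : a = 0 := by omega
      have := macUp_succ_le (k + 1) b
      rw [zero_add] at hlt
      omega
    obtain ⟨A, c, hA, hc, hac⟩ := exists_blk (k + 1) (a + b) (by omega)
    obtain ⟨hS, hF⟩ := hW.subadd_and_finalMin (k := k + 1) (by omega)
    rw [hac, macUp_blk hA hc.le, blk_succ] at hlt
    by_cases hcase : blk (k + 1) A ≤ a
    · obtain ⟨c', rfl⟩ := Nat.exists_eq_add_of_le hcase
      obtain rfl : c = c' + b := by omega
      rw [hac, hW.step _ A _ hA hc.le, hW.step _ A c' hA (by omega)]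
      have := hS c' b
      linarith
    obtain ⟨B, rfl⟩ : ∃ B, A = B + 1 := ⟨A - 1, by omega⟩
    have hB : 1 ≤ B := by
      by_contra hcon
      obtain rfl : B = 0 := by omega
      rw [zero_add, blk_one] at hcase
      omega
    have hh : W (k + 1 + 1) (a + b) = W (k + 1 + 1) (blk (k + 1) B)
        + W (k + 1) (fullCard (k + 1) B) + W (k + 1) c := by
      rw [hac, hW.step _ _ _ hA hc.le, blk_succ, hW.step _ _ _ hB le_rfl]
    rw [hh]
    rw [blk_succ (k + 1) B] at hac hcase
    by_cases hbT : b ≤ fullCard (k + 1) B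
    · obtain ⟨r, hr⟩ := Nat.exists_eq_add_of_le hbT
      obtain rfl : a = blk (k + 1) B + (c + r) := by omega
      have h := hF B b r c (by omega) (by omega)
      rw [hW.step _ B _ hB (by omega)]
      linarith
    · rw [fullCard_succ] at hbT
      obtain ⟨e, he, rfl, hbe⟩ := blk_remainder hA hc (not_le.mp hbT).le (by omega)
      rw [hbe] at hlt
      have hec : e ≤ c := by
        by_contra hcon
        have h1 := macUp_succ_le k c
        have h2 := (macUp_strictMono k).monotone (not_le.mp hcon).le
        omega
      obtain ⟨c', rfl⟩ := Nat.exists_eq_add_of_le' hec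
      have h := ih (a := c') (b := e) (by omega) (by omega)
      rw [fullCard_succ] at hac hcase ⊢
      obtain rfl : a = blk (k + 1) B + c' := by omega
      rw [hW.step _ B _ hB (by rw [fullCard_succ]; omega), hW.step _ _ _ hA he]
      linarith

lemma macUp_le_add {k a b : ℕ} (hlt : a + b + macUp k b < macUp (k + 1) (a + b)) :
    macUp (k + 1) (a + b) ≤ macUp (k + 1) a + macUp k b := by
  have := (adm_macUp (k + 1)).le_add le_rfl hlt
  exact_mod_cast this

/-- In the equality case of `macUp_le_add`, the term `(k + 2) * macUp` in the admissible family of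
`adm_macUp_macUp` cancels, which leaves an upper bound for the second iterates. -/
lemma macUp_macUp_add_le {k a b : ℕ} (hlt : a + b + macUp k b < macUp (k + 1) (a + b))
    (heq : macUp (k + 1) a + macUp k b = macUp (k + 1) (a + b)) :
    macUp (k + 1) (macUp (k + 1) a) + macUp k (macUp k b)
      ≤ macUp (k + 1) (macUp (k + 1) (a + b)) := by
  have h := (adm_macUp_macUp (k + 1)).le_add le_rfl hlt
  simp only [← heq] at h ⊢
  push_cast at h
  zify
  linarith

/-- The relation `h + b^{<k>} = h^{<k+1>}` is preserved when `(h, b)` is replaced by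
`(h^{<k+1>}, b^{<k>})`: it determines the leading term of `b` from that of `h`, and passes to the
remainders. -/
lemma macUp_macUp_eq {k h b : ℕ} (heq : h + macUp k b = macUp (k + 1) h) :
    macUp (k + 1) h + macUp k (macUp k b) = macUp (k + 1) (macUp (k + 1) h) := by
  induction k generalizing h b with
  | zero =>
    simp only [macUp_zero_left, zero_add] at heq ⊢
    rcases Nat.eq_zero_or_pos h with rfl | hh
    · simp only [macUp_zero_right] at heq ⊢; omega
    · rw [macUp_one_left hh] at heq ⊢
      rw [macUp_one_left (by omega)]; omega
  | succ k ih =>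
    rcases Nat.eq_zero_or_pos h with rfl | hh
    · simp only [macUp_zero_right, zero_add] at heq ⊢
      rw [heq, macUp_zero_right]
    obtain ⟨A, c, hA, hc, rfl⟩ := exists_blk (k + 1) h hh
    rw [macUp_blk hA hc.le, blk_succ] at heq
    have hbA : blk k A ≤ b := by
      by_contra hcon
      have h1 := macUp_strictMono (k + 1) (not_le.mp hcon)
      rw [macUp_blk_self, if_neg (by omega), ← fullCard_succ] at h1
      have h2 := (macUp_strictMono (k + 1)).le_apply (x := c)
      omega
    obtain ⟨e, he, rfl, hbe⟩ := blk_remainder hA hc hbA (by omega)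
    have h1 := ih (h := c) (b := e) (by omega)
    have he' : macUp k e ≤ fullCard k (A + 1) := by
      rw [← macUp_fullCard]; exact (macUp_strictMono k).monotone he
    have hc' : macUp (k + 1) c ≤ fullCard (k + 1) (A + 1) := by
      rw [← macUp_fullCard]; exact (macUp_strictMono _).monotone hc.le
    rw [macUp_blk hA hc.le, macUp_blk (by omega) hc', macUp_blk hA he, macUp_blk (by omega) he',
      blk_succ (k + 1) (A + 1), fullCard_succ]
    omega

/-! ### Slicing a set of monomials along one variable -/

lemma mem_shad {n : ℕ} {V : Finset (Fin n → ℕ)} {w : Fin n → ℕ} :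
    w ∈ shad V ↔ ∃ v ∈ V, ∃ i, v + Pi.single i 1 = w := by
  simp only [shad, mem_image, mem_product, mem_univ, true_and, Prod.exists]
  exact ⟨fun ⟨i, v, hv, h⟩ => ⟨v, hv, i, h⟩, fun ⟨v, hv, i, h⟩ => ⟨i, v, hv, h⟩⟩

lemma shad_mono {n : ℕ} {V U : Finset (Fin n → ℕ)} (h : V ⊆ U) : shad V ⊆ shad U := by
  intro w hw
  obtain ⟨v, hv, i, rfl⟩ := mem_shad.mp hw
  exact mem_shad.mpr ⟨v, h hv, i, rfl⟩

/-- The monomials of `V` not divisible by `x₀`, as monomials in the remaining `n` variables. -/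
noncomputable def restr {n : ℕ} (V : Finset (Fin (n + 1) → ℕ)) : Finset (Fin n → ℕ) :=
  V.preimage (fun u => (Fin.cons 0 u : Fin (n + 1) → ℕ))
    (Fin.cons_right_injective (α := fun _ => ℕ) 0).injOn

/-- The colon set `V : x₀`, of all monomials `w` with `x₀ w ∈ V`. -/
noncomputable def colon {n : ℕ} (V : Finset (Fin (n + 1) → ℕ)) : Finset (Fin (n + 1) → ℕ) :=
  V.preimage (fun w => w + Pi.single 0 1) (add_left_injective _).injOn

/-- Monomials in `n` variables regarded as `x₀`-free monomials in `n + 1` variables. -/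
def incl {n : ℕ} (U : Finset (Fin n → ℕ)) : Finset (Fin (n + 1) → ℕ) :=
  U.image (fun u => (Fin.cons 0 u : Fin (n + 1) → ℕ))

section Slices

variable {n : ℕ}

lemma mem_restr {V : Finset (Fin (n + 1) → ℕ)} {u : Fin n → ℕ} :
    u ∈ restr V ↔ (Fin.cons 0 u : Fin (n + 1) → ℕ) ∈ V := by
  rw [restr, mem_preimage]

lemma mem_colon {V : Finset (Fin (n + 1) → ℕ)} {w : Fin (n + 1) → ℕ} :
    w ∈ colon V ↔ w + Pi.single 0 1 ∈ V := by
  rw [colon, mem_preimage]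

lemma mem_incl {U : Finset (Fin n → ℕ)} {w : Fin (n + 1) → ℕ} :
    w ∈ incl U ↔ w 0 = 0 ∧ Fin.tail w ∈ U := by
  simp only [incl, mem_image]
  constructor
  · rintro ⟨u, hu, rfl⟩; simpa using hu
  · rintro ⟨h0, h⟩
    refine ⟨_, h, ?_⟩
    conv_rhs => rw [← Fin.cons_self_tail w, h0]

lemma card_incl (U : Finset (Fin n → ℕ)) : (incl U).card = U.card :=
  card_image_of_injective _ (Fin.cons_right_injective (α := fun _ => ℕ) 0)

lemma exists_add_single {w : Fin (n + 1) → ℕ} (h : w 0 ≠ 0) :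
    ∃ v : Fin (n + 1) → ℕ, v + Pi.single 0 1 = w := by
  refine ⟨w - Pi.single 0 1, ?_⟩
  funext i
  by_cases hi : i = 0
  · subst hi; simp; omega
  · simp [hi]

lemma cons_tail_of_zero {w : Fin (n + 1) → ℕ} (h : w 0 = 0) :
    (Fin.cons 0 (Fin.tail w) : Fin (n + 1) → ℕ) = w := by
  rw [← h, Fin.cons_self_tail]

lemma card_eq_restr_add_colon (V : Finset (Fin (n + 1) → ℕ)) :
    V.card = (restr V).card + (colon V).card := by
  have h : V = incl (restr V) ∪ (colon V).image (fun w => w + Pi.single 0 1) := by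
    ext w
    simp only [mem_union, mem_incl, mem_restr, mem_image, mem_colon]
    constructor
    · intro hw
      by_cases h0 : w 0 = 0
      · exact Or.inl ⟨h0, by rwa [cons_tail_of_zero h0]⟩
      · obtain ⟨v, rfl⟩ := exists_add_single h0
        exact Or.inr ⟨v, hw, rfl⟩
    · rintro (⟨h0, hw⟩ | ⟨v, hv, rfl⟩)
      · rwa [cons_tail_of_zero h0] at hw
      · exact hv
  have hd : Disjoint (incl (restr V)) ((colon V).image (fun w => w + Pi.single 0 1)) := by
    rw [Finset.disjoint_left]
    intro w hw hw'
    obtain ⟨v, _, rfl⟩ := mem_image.mp hw'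
    have := (mem_incl.mp hw).1
    simp at this
  conv_lhs => rw [h]
  rw [card_union_of_disjoint hd, card_incl, card_image_of_injective _ (add_left_injective _)]

lemma restr_shad (V : Finset (Fin (n + 1) → ℕ)) : restr (shad V) = shad (restr V) := by
  ext u
  simp only [mem_restr, mem_shad]
  constructor
  · rintro ⟨v, hv, i, h⟩
    have h0 := congrFun h 0
    simp only [Pi.add_apply, Fin.cons_zero, Nat.add_eq_zero_iff] at h0
    have hi : i ≠ 0 := by rintro rfl; simp at h0
    obtain ⟨j, rfl⟩ := Fin.exists_succ_eq.mpr hi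
    refine ⟨Fin.tail v, by rwa [cons_tail_of_zero h0.1], j, ?_⟩
    funext t
    have := congrFun h t.succ
    simpa [Fin.tail, Pi.single_apply] using this
  · rintro ⟨v, hv, j, rfl⟩
    refine ⟨_, hv, j.succ, ?_⟩
    funext t
    refine Fin.cases ?_ (fun t => ?_) t
    · simp
    · simp [Pi.single_apply]

/-- A monomial of `M V` divisible by `x₀` is `x₀` times an `x₀`-free element of `V`, or lies in
`x₀ M (V : x₀)`. -/
lemma colon_shad (V : Finset (Fin (n + 1) → ℕ)) :
    colon (shad V) = incl (restr V) ∪ shad (colon V) := by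
  ext w
  simp only [mem_union, mem_incl, mem_restr, mem_shad, mem_colon]
  constructor
  · rintro ⟨v, hv, i, h⟩
    by_cases hi : i = 0
    · subst hi
      obtain rfl := add_right_cancel h
      by_cases h0 : v 0 = 0
      · exact Or.inl ⟨h0, by rwa [cons_tail_of_zero h0]⟩
      · obtain ⟨v', rfl⟩ := exists_add_single h0
        exact Or.inr ⟨v', hv, 0, rfl⟩
    · have h0 : v 0 ≠ 0 := by
        have := congrFun h 0
        simp [Ne.symm hi] at this
        omega
      obtain ⟨v', rfl⟩ := exists_add_single h0
      refine Or.inr ⟨v', hv, i, ?_⟩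
      rw [add_right_comm] at h
      exact add_right_cancel h
  · rintro (⟨h0, hw⟩ | ⟨v, hv, i, rfl⟩)
    · rw [cons_tail_of_zero h0] at hw
      exact ⟨w, hw, 0, rfl⟩
    · exact ⟨_, hv, i, add_right_comm _ _ _⟩

lemma subset_colon_shad (V : Finset (Fin (n + 1) → ℕ)) : V ⊆ colon (shad V) := fun v hv =>
  mem_colon.mpr (mem_shad.mpr ⟨v, hv, 0, rfl⟩)

lemma incl_restr_subset (V : Finset (Fin (n + 1) → ℕ)) : incl (restr V) ⊆ V := by
  intro w hw
  obtain ⟨h0, h⟩ := mem_incl.mp hw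
  rwa [mem_restr, cons_tail_of_zero h0] at h

lemma incl_shad_subset (U : Finset (Fin n → ℕ)) : incl (shad U) ⊆ shad (incl U) := by
  have h : restr (incl U) = U := by ext u; simp [mem_restr, mem_incl]
  have := incl_restr_subset (shad (incl U))
  rwa [restr_shad, h] at this

lemma card_shad_of_one (V : Finset (Fin 1 → ℕ)) : (shad V).card = V.card := by
  have : shad V = V.image (fun v => v + Pi.single 0 1) := by
    ext w
    simp only [mem_shad, mem_image]
    exact ⟨fun ⟨v, hv, i, h⟩ => ⟨v, hv, by rwa [Subsingleton.elim i 0] at h⟩,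
      fun ⟨v, hv, h⟩ => ⟨v, hv, 0, h⟩⟩
  rw [this, card_image_of_injective _ (add_left_injective _)]

lemma colon_lt {V : Finset (Fin (n + 1) → ℕ)} {N : ℕ} (h : ∀ v ∈ V, v 0 < N + 1) :
    ∀ v ∈ colon V, v 0 < N := by
  intro v hv
  have := h _ (mem_colon.mp hv)
  simpa using this

end Slices

/-! ### Macaulay bound and persistence -/

/-- **Macaulay's theorem** for finite sets of monomials, not necessarily of one degree. Slice along
`x₀`: either `V ⊆ M V : x₀` and the bound for the `x₀`-free part suffice, or `macUp_le_add` applies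
to the bounds for both slices. The inner induction is on a bound for the exponents of `x₀`. -/
theorem macUp_card_le_card_shad (m : ℕ) (V : Finset (Fin (m + 1) → ℕ)) :
    macUp m V.card ≤ (shad V).card := by
  induction m with
  | zero => rw [card_shad_of_one, macUp_zero_left]
  | succ m ih =>
    obtain ⟨N, hN⟩ : ∃ N, ∀ v ∈ V, v 0 < N :=
      ⟨V.sup (fun v => v 0) + 1, fun v hv =>
        Nat.lt_succ_of_le (le_sup (f := fun v : Fin (m + 1 + 1) → ℕ => v 0) hv)⟩
    induction N generalizing V with
    | zero =>
      obtain rfl : V = ∅ := eq_empty_of_forall_notMem fun v hv => by have := hN v hv; omega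
      simp [macUp_zero_right]
    | succ N ihN =>
      have hsh := card_eq_restr_add_colon (shad V)
      have hV := card_eq_restr_add_colon V
      rw [restr_shad] at hsh
      have h1 := ih (restr V)
      have h2 := ihN (colon V) (colon_lt hN)
      have h3 := card_le_card (subset_colon_shad V)
      have h4 : (shad (colon V)).card ≤ (colon (shad V)).card := by
        rw [colon_shad]; exact card_le_card subset_union_right
      rw [add_comm (restr V).card] at hV
      by_cases hlt : (colon V).card + (restr V).card + macUp m (restr V).card
          < macUp (m + 1) ((colon V).card + (restr V).card)
      · have := macUp_le_add hlt
        rw [hV]; omega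
      · rw [← hV] at hlt
        omega

/-- If `M V` has the least size allowed by Macaulay's theorem, then so has `M² V`. -/
theorem card_shad_shad_le (m : ℕ) (V : Finset (Fin (m + 1) → ℕ))
    (hG : (shad V).card = macUp m V.card) :
    (shad (shad V)).card ≤ macUp m (macUp m V.card) := by
  induction m with
  | zero => simp [card_shad_of_one, macUp_zero_left]
  | succ m ih =>
    obtain ⟨N, hN⟩ : ∃ N, ∀ v ∈ V, v 0 < N :=
      ⟨V.sup (fun v => v 0) + 1, fun v hv =>
        Nat.lt_succ_of_le (le_sup (f := fun v : Fin (m + 1 + 1) → ℕ => v 0) hv)⟩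
    induction N generalizing V with
    | zero =>
      obtain rfl : V = ∅ := eq_empty_of_forall_notMem fun v hv => by have := hN v hv; omega
      simp [macUp_zero_right, shad]
    | succ N ihN =>
      have hsh := card_eq_restr_add_colon (shad V)
      have hssh := card_eq_restr_add_colon (shad (shad V))
      have hV := card_eq_restr_add_colon V
      rw [restr_shad] at hsh
      rw [restr_shad, restr_shad, colon_shad (shad V), restr_shad] at hssh
      have h1 := macUp_card_le_card_shad m (restr V)
      have h2 := macUp_card_le_card_shad (m + 1) (colon V)
      have h3 := card_le_card (subset_colon_shad V)
      have hsub : shad (colon V) ⊆ colon (shad V) := by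
        rw [colon_shad]; exact subset_union_right
      have h4 := card_le_card hsub
      rw [add_comm (restr V).card] at hV
      by_cases hlt : (colon V).card + (restr V).card + macUp m (restr V).card
          < macUp (m + 1) ((colon V).card + (restr V).card)
      · have h5 := macUp_le_add hlt
        rw [hV] at hG
        -- All estimates used for the Macaulay bound are equalities here; in particular
        -- `M V : x₀ = M (V : x₀)`, and both slices have shadows of minimal size.
        have heq : shad (colon V) = colon (shad V) := eq_of_subset_of_card_le hsub (by omega)
        have h6 := ih (restr V) (by omega)
        have h7 := ihN (colon V) (by omega) (colon_lt hN)
        have h8 := macUp_macUp_add_le hlt (by omega)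
        have hin : incl (shad (restr V)) ⊆ shad (shad (colon V)) := by
          refine (incl_shad_subset _).trans (shad_mono ?_)
          rw [heq, colon_shad]; exact subset_union_left
        rw [← heq, union_eq_right.mpr hin] at hssh
        rw [hV]; omega
      · rw [← hV] at hlt
        -- Equality now forces `M V : x₀ = V`, so that `M² V : x₀ = M V`.
        have heq : V = colon (shad V) := eq_of_subset_of_card_le (subset_colon_shad V) (by omega)
        have h6 := ih (restr V) (by omega)
        have h7 := macUp_macUp_eq (k := m) (h := V.card) (b := (restr V).card) (by omega)
        have hin : incl (shad (restr V)) ⊆ shad V :=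
          (incl_shad_subset _).trans (shad_mono (incl_restr_subset V))
        rw [← heq, union_eq_right.mpr hin] at hssh
        omega

/-- **Gotzmann's persistence theorem for monomial ideals.**
If `V` is a set of monomials of degree `d` in `K[x_1,…,x_n]` with
`|MV| = |V|^{<n-1>}`, then `|M^{k+1}V| = |M^k V|^{<n-1>}` for all `k ≥ 0`. -/
theorem persistence_monomial {n d : ℕ} (hn : 0 < n) (V : Finset (Fin n → ℕ))
    (hdeg : ∀ v ∈ V, ∑ i, v i = d)
    (hG : (shad V).card = macUp (n - 1) V.card) :
    ∀ k : ℕ, (shad^[k + 1] V).card = macUp (n - 1) (shad^[k] V).card := by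
  obtain ⟨m, rfl⟩ : ∃ m, n = m + 1 := ⟨n - 1, by omega⟩
  rw [Nat.add_sub_cancel] at hG ⊢
  intro k
  induction k with
  | zero => simpa using hG
  | succ k ih =>
    rw [Function.iterate_succ_apply'] at ih
    refine le_antisymm ?_ ?_
    · rw [Function.iterate_succ_apply', Function.iterate_succ_apply', ih]
      exact card_shad_shad_le m _ ih
    · rw [Function.iterate_succ_apply' shad (k + 1)]
      exact macUp_card_le_card_shad m _
end

section
/- Let a, b and n be positive integers. Then a^{<n>} + b^{<n>} > (a+b)^{<n>}. -/
/-!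
Writing `h = C(a_n, n) + C(a_{n-1}, n-1) + ⋯` greedily, Pascal's rule gives
`h^{<n>} = h + (C(a_n, n-1) + C(a_{n-1}, n-2) + ⋯)`, and the bracket is the size of the shadow of the
colex initial segment consisting of `h` sets of size `n` (`exists_initSeg_macUp`). By the
Kruskal–Katona theorem, `h^{<n>} - h` is therefore the least possible size of the shadow of a family
of `h` sets of size `n` (`macUp_le_of_sized`).

Take the colex initial segments `𝒜` and `ℬ` with `a` and `b` members and relabel the ground set of
`ℬ` so that it meets that of `𝒜` only in the first `n - 1` points. No `n`-set is then in both
families, but their shadows share the `(n-1)`-set of common points, so the union has `a + b` members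
and its shadow is strictly smaller than the sum of the two shadows.
-/

open Finset

open Finset.Colex
open scoped FinsetFamily

/-! ### Relabelling, and Kruskal–Katona on `ℕ` -/

/-- Shadows commute with injective relabelling of the ground set. -/
lemma shadow_image_image {α β : Type*} [DecidableEq α] [DecidableEq β] {f : α → β}
    (hf : Function.Injective f) (𝒜 : Finset (Finset α)) :
    ∂ (𝒜.image (image f)) = (∂ 𝒜).image (image f) := by
  ext t
  simp only [mem_shadow_iff, mem_image]
  constructor
  · rintro ⟨_, ⟨s, hs, rfl⟩, _, hx, rfl⟩
    obtain ⟨y, hy, rfl⟩ := mem_image.1 hx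
    exact ⟨s.erase y, ⟨s, hs, y, hy, rfl⟩, image_erase hf s y⟩
  · rintro ⟨_, ⟨s, hs, y, hy, rfl⟩, rfl⟩
    exact ⟨s.image f, ⟨s, hs, rfl⟩, f y, mem_image_of_mem f hy, (image_erase hf s y).symm⟩

/-- A family of subsets of `{0, …, N - 1}` is the image of a family over `Fin N`. -/
lemma exists_family_fin (𝒜 : Finset (Finset ℕ)) {N : ℕ} (h : ∀ s ∈ 𝒜, s ⊆ range N) :
    ∃ 𝒜' : Finset (Finset (Fin N)), 𝒜'.image (image Fin.val) = 𝒜 := by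
  refine ⟨univ.filter fun s => s.image Fin.val ∈ 𝒜, ?_⟩
  ext t
  simp only [mem_image, mem_filter, mem_univ, true_and]
  constructor
  · rintro ⟨s, hs, rfl⟩
    exact hs
  · intro ht
    have key : image Fin.val (univ.filter fun i : Fin N => (i : ℕ) ∈ t) = t := by
      ext x
      simp only [mem_image, mem_filter, mem_univ, true_and]
      constructor
      · rintro ⟨i, hi, rfl⟩
        exact hi
      · intro hx
        exact ⟨⟨x, mem_range.1 (h t ht hx)⟩, hx, rfl⟩
    exact ⟨_, by rwa [key], key⟩

/-- Every finite family of finite sets of naturals lives on a bounded ground set. -/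
lemma exists_range_bound (𝒜 : Finset (Finset ℕ)) : ∃ N, ∀ s ∈ 𝒜, s ⊆ range N := by
  obtain ⟨N, hN⟩ := Finset.exists_nat_subset_range (𝒜.sup id)
  exact ⟨N, fun s hs => (Finset.le_sup (f := id) hs).trans hN⟩

/-- The Kruskal–Katona theorem over the ground set `ℕ`. -/
lemma kruskal_katona_nat {𝒜 𝒞 : Finset (Finset ℕ)} {r : ℕ}
    (h𝒜 : (𝒜 : Set (Finset ℕ)).Sized r) (hcard : #𝒞 ≤ #𝒜) (h𝒞 : IsInitSeg 𝒞 r) :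
    #(∂ 𝒞) ≤ #(∂ 𝒜) := by
  obtain ⟨N, hN⟩ := exists_range_bound (𝒜 ∪ 𝒞)
  obtain ⟨𝒜, rfl⟩ := exists_family_fin 𝒜 fun s hs => hN s (mem_union_left _ hs)
  obtain ⟨𝒞, rfl⟩ := exists_family_fin 𝒞 fun s hs => hN s (mem_union_right _ hs)
  have hv : Function.Injective (Fin.val : Fin N → ℕ) := Fin.val_injective
  have hinj : Function.Injective (image (Fin.val : Fin N → ℕ)) := image_injective hv
  rw [card_image_of_injective _ hinj, card_image_of_injective _ hinj] at hcard
  rw [shadow_image_image hv, shadow_image_image hv, card_image_of_injective _ hinj,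
    card_image_of_injective _ hinj]
  refine kruskal_katona (r := r) ?_ hcard ⟨?_, ?_⟩
  · intro s hs
    rw [← card_image_of_injective s hv]
    exact h𝒜 (mem_coe.2 (mem_image_of_mem _ (mem_coe.1 hs)))
  · intro s hs
    rw [← card_image_of_injective s hv]
    exact h𝒞.1 (mem_coe.2 (mem_image_of_mem _ (mem_coe.1 hs)))
  · rintro s t hs ⟨hts, ht⟩
    have := h𝒞.2 (t := t.image Fin.val) (mem_image_of_mem (image Fin.val) hs)
      ⟨(toColex_image_lt_toColex_image Fin.val_strictMono).2 hts, by
        rwa [card_image_of_injective t hv]⟩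
    obtain ⟨u, hu, hut⟩ := mem_image.1 this
    rwa [← hinj hut]

/-! ### Recursive structure of colex initial segments -/

/-- Colex exhausts the `r`-subsets of `{0, …, a - 1}` before using any element `≥ a`. -/
lemma powersetCard_subset_of_isInitSeg {𝒞 : Finset (Finset ℕ)} {r a x : ℕ} {s : Finset ℕ}
    (h : IsInitSeg 𝒞 r) (hs : s ∈ 𝒞) (hx : x ∈ s) (hax : a ≤ x) :
    powersetCard r (range a) ⊆ 𝒞 := by
  intro t ht
  rw [mem_powersetCard] at ht
  refine h.2 hs ⟨?_, ht.2⟩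
  rw [toColex_lt_toColex_iff_exists_forall_lt]
  refine ⟨x, hx, fun hxt => ?_, fun b hb _ => ?_⟩
  · have := mem_range.1 (ht.1 hxt)
    omega
  · have := mem_range.1 (ht.1 hb)
    omega

lemma subset_range_of_isInitSeg {𝒞 : Finset (Finset ℕ)} {r a : ℕ}
    (h : IsInitSeg 𝒞 r) (hcard : #𝒞 < a.choose r) : ∀ s ∈ 𝒞, s ⊆ range a := by
  intro s hs x hx
  by_contra hxa
  have := card_le_card
    (powersetCard_subset_of_isInitSeg h hs hx (by simpa using hxa))
  rw [card_powersetCard, card_range] at this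
  omega

lemma range_mem_of_isInitSeg {𝒞 : Finset (Finset ℕ)} {r : ℕ}
    (h : IsInitSeg 𝒞 r) (hne : 𝒞.Nonempty) : range r ∈ 𝒞 := by
  obtain ⟨s, hs⟩ := hne
  have hcard : #s = r := h.1 (mem_coe.2 hs)
  by_cases hsub : s ⊆ range r
  · rwa [← eq_of_subset_of_card_le hsub (by simp [hcard])]
  · obtain ⟨x, hx, hxr⟩ := not_subset.1 hsub
    exact powersetCard_subset_of_isInitSeg h hs hx (by simpa using hxr) (by simp)

/-- Adjoining the point `a` to the members of a colex initial segment on `{0, …, a - 1}`, after all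
the sets avoiding `a`, gives a colex initial segment again. -/
lemma isInitSeg_step {𝒞 : Finset (Finset ℕ)} {n a : ℕ} (h : IsInitSeg 𝒞 n)
    (ha : ∀ s ∈ 𝒞, s ⊆ range a) :
    IsInitSeg (powersetCard (n + 1) (range a) ∪ 𝒞.image (insert a)) (n + 1) := by
  have hna : ∀ s ∈ 𝒞, a ∉ s := fun s hs hmem => by simpa using ha s hs hmem
  constructor
  · intro s hs
    rcases mem_union.1 (mem_coe.1 hs) with hs | hs
    · exact (mem_powersetCard.1 hs).2
    · obtain ⟨u, hu, rfl⟩ := mem_image.1 hs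
      rw [card_insert_of_notMem (hna u hu), h.1 (mem_coe.2 hu)]
  · rintro s t hs ⟨hlt, ht⟩
    rcases mem_union.1 hs with hs | hs
    · refine mem_union_left _ (mem_powersetCard.2 ⟨fun x hx => mem_range.2 ?_, ht⟩)
      exact forall_lt_mono hlt.le
        (fun b hb => mem_range.1 ((mem_powersetCard.1 hs).1 hb)) x hx
    · obtain ⟨u, hu, rfl⟩ := mem_image.1 hs
      have hle : ∀ x ∈ t, x ≤ a := forall_le_mono hlt.le fun b hb => by
        rcases mem_insert.1 hb with rfl | hb
        · exact le_rfl
        · exact (mem_range.1 (ha u hu hb)).le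
      by_cases hat : a ∈ t
      · refine mem_union_right _ (mem_image.2 ⟨t.erase a, h.2 hu ⟨?_, ?_⟩, insert_erase hat⟩)
        · obtain ⟨c, hc, hct, hall⟩ := toColex_lt_toColex_iff_exists_forall_lt.1 hlt
          have hca : c ≠ a := fun hca => hct (hca ▸ hat)
          refine toColex_lt_toColex_iff_exists_forall_lt.2
            ⟨c, mem_of_mem_insert_of_ne hc hca, fun hc' => hct (mem_of_mem_erase hc'), ?_⟩
          intro b hb hbu
          refine hall b (mem_of_mem_erase hb) fun hb' => hbu ?_
          exact mem_of_mem_insert_of_ne hb' (ne_of_mem_erase hb)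
        · rw [card_erase_of_mem hat, ht, Nat.add_sub_cancel]
      · refine mem_union_left _ (mem_powersetCard.2 ⟨fun x hx => mem_range.2 ?_, ht⟩)
        exact lt_of_le_of_ne (hle x hx) fun hxa => hat (hxa ▸ hx)

/-- Needs `n + 1 ≤ a`, so that every `n`-subset of `{0, …, a - 1}` extends to an `(n + 1)`-subset. -/
lemma shadow_step {𝒞 : Finset (Finset ℕ)} {n a : ℕ} (h : IsInitSeg 𝒞 n)
    (ha : ∀ s ∈ 𝒞, s ⊆ range a) (hn : n + 1 ≤ a) :
    ∂ (powersetCard (n + 1) (range a) ∪ 𝒞.image (insert a)) =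
      powersetCard n (range a) ∪ (∂ 𝒞).image (insert a) := by
  have hna : ∀ s ∈ 𝒞, a ∉ s := fun s hs hmem => by simpa using ha s hs hmem
  ext t
  constructor
  · intro ht
    obtain ⟨s, hs, x, hx, rfl⟩ := mem_shadow_iff.1 ht
    rcases mem_union.1 hs with hs | hs
    · rw [mem_powersetCard] at hs
      refine mem_union_left _ (mem_powersetCard.2 ⟨(erase_subset _ _).trans hs.1, ?_⟩)
      rw [card_erase_of_mem hx, hs.2, Nat.add_sub_cancel]
    · obtain ⟨u, hu, rfl⟩ := mem_image.1 hs
      by_cases hxa : x = a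
      · subst hxa
        rw [erase_insert (hna u hu)]
        exact mem_union_left _ (mem_powersetCard.2 ⟨ha u hu, h.1 (mem_coe.2 hu)⟩)
      · rw [erase_insert_of_ne (Ne.symm hxa)]
        exact mem_union_right _ (mem_image_of_mem _
          (erase_mem_shadow hu (mem_of_mem_insert_of_ne hx hxa)))
  · intro ht
    rcases mem_union.1 ht with ht | ht
    · rw [mem_powersetCard] at ht
      obtain ⟨x, hx, hxt⟩ := exists_mem_notMem_of_card_lt_card
        (s := t) (t := range a) (by rw [card_range]; omega)
      refine mem_shadow_iff_insert_mem.2 ⟨x, hxt, mem_union_left _ (mem_powersetCard.2 ⟨?_, ?_⟩)⟩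
      · exact insert_subset hx ht.1
      · rw [card_insert_of_notMem hxt, ht.2]
    · obtain ⟨v, hv, rfl⟩ := mem_image.1 ht
      obtain ⟨u, hu, x, hx, rfl⟩ := mem_shadow_iff.1 hv
      have hxa : a ≠ x := fun hxa => hna u hu (hxa ▸ hx)
      rw [← erase_insert_of_ne hxa]
      exact erase_mem_shadow (mem_union_right _ (mem_image_of_mem _ hu)) (mem_insert_of_mem hx)

lemma card_union_image_insert {𝒞 : Finset (Finset ℕ)} (r a : ℕ) (ha : ∀ s ∈ 𝒞, s ⊆ range a) :
    #(powersetCard r (range a) ∪ 𝒞.image (insert a)) = a.choose r + #𝒞 := by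
  have hna : ∀ s ∈ 𝒞, a ∉ s := fun s hs hmem => by simpa using ha s hs hmem
  rw [card_union_of_disjoint, card_powersetCard, card_range, card_image_of_injOn]
  · intro s hs t ht hst
    have hst' : insert a s = insert a t := hst
    rw [← erase_insert (hna s hs), hst', erase_insert (hna t ht)]
  · rw [disjoint_left]
    intro s hs hs'
    obtain ⟨u, -, rfl⟩ := mem_image.1 hs'
    simpa using (mem_powersetCard.1 hs).1 (mem_insert_self a u)

/-! ### The shadow of an initial segment -/

lemma lt_choose_add (n h : ℕ) : h < (h + n + 1).choose (n + 1) := by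
  induction h with
  | zero => simp
  | succ h ih =>
    have h1 : 0 < (h + n + 1).choose n := Nat.choose_pos (by omega)
    have h2 : h + 1 + n + 1 = (h + n + 1) + 1 := by omega
    rw [h2, Nat.choose_succ_succ, Nat.succ_eq_add_one]
    omega

/-- The colex initial segment of `h` sets of size `n` has `h^{<n>} - h` sets in its shadow. For
`n = 0` it exists only when `h ≤ 1`, there being a single `0`-set. -/
lemma exists_initSeg_macUp (n : ℕ) : ∀ h : ℕ, (n = 0 → h ≤ 1) →
    ∃ 𝒞 : Finset (Finset ℕ), IsInitSeg 𝒞 n ∧ #𝒞 = h ∧ #(∂ 𝒞) + h = macUp n h := by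
  induction n with
  | zero =>
    intro h hh
    have hh : h = 0 ∨ h = 1 := by have := hh rfl; omega
    rcases hh with rfl | rfl
    · exact ⟨∅, isInitSeg_empty, rfl, by simp [macUp]⟩
    · refine ⟨{∅}, ⟨?_, ?_⟩, rfl, by simp [macUp]⟩
      · intro s hs
        simp_all
      · rintro s t - ⟨-, ht⟩
        simpa using ht
  | succ n ih =>
    intro h _
    rcases Nat.eq_zero_or_pos h with rfl | hpos
    · exact ⟨∅, isInitSeg_empty, rfl, by simp [macUp]⟩
    set a := Nat.findGreatest (fun a => Nat.choose a (n + 1) ≤ h) (h + n + 1)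
    have hna : n + 1 ≤ a :=
      Nat.le_findGreatest (by omega) (by rw [Nat.choose_self]; exact hpos)
    have hle : a.choose (n + 1) ≤ h :=
      Nat.findGreatest_spec (P := fun a => Nat.choose a (n + 1) ≤ h) (m := n + 1)
        (by omega) (by rw [Nat.choose_self]; exact hpos)
    -- The search bound `h + n + 1` does not interfere, as it already overshoots `h`.
    have hlt : h < (a + 1).choose (n + 1) := by
      by_cases hb : a + 1 ≤ h + n + 1
      · exact not_le.1
          (Nat.findGreatest_is_greatest (P := fun a => Nat.choose a (n + 1) ≤ h)
            (Nat.lt_succ_self a) hb)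
      · exact (lt_choose_add n h).trans_le (Nat.choose_le_choose _ (by omega))
    have hmac : macUp (n + 1) h =
        (a + 1).choose (n + 1) + macUp n (h - a.choose (n + 1)) := by
      rw [macUp, if_neg hpos.ne']
    have hpascal := Nat.choose_succ_succ a n
    simp only [Nat.succ_eq_add_one] at hpascal
    have hrem : h - a.choose (n + 1) < a.choose n := by omega
    obtain ⟨𝒞, hseg, hcard, hsh⟩ := ih (h - a.choose (n + 1)) (by
      rintro rfl
      rw [Nat.choose_zero_right] at hrem
      omega)
    have hsub := subset_range_of_isInitSeg hseg (by rwa [hcard])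
    refine ⟨_, isInitSeg_step hseg hsub, ?_, ?_⟩
    · rw [card_union_image_insert _ _ hsub, hcard]
      omega
    · have hsub' : ∀ s ∈ ∂ 𝒞, s ⊆ range a := fun s hs => by
        obtain ⟨u, hu, hsu⟩ := exists_subset_of_mem_shadow hs
        exact hsu.trans (hsub u hu)
      rw [shadow_step hseg hsub hna, card_union_image_insert _ _ hsub', hmac]
      omega

/-! ### Strict subadditivity -/

/-- Kruskal–Katona in numerical form: a family of `h` sets of size `n` has at least `h^{<n>} - h`
sets in its shadow. -/
lemma macUp_le_of_sized {n : ℕ} (hn : 0 < n) {𝒜 : Finset (Finset ℕ)}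
    (h𝒜 : (𝒜 : Set (Finset ℕ)).Sized n) : macUp n #𝒜 ≤ #(∂ 𝒜) + #𝒜 := by
  obtain ⟨𝒞, hseg, hcard, hsh⟩ := exists_initSeg_macUp n #𝒜 fun h => absurd h hn.ne'
  have := kruskal_katona_nat h𝒜 hcard.le hseg
  omega

/-- For positive integers `a`, `b` and `n`, `a^{<n>} + b^{<n>} > (a+b)^{<n>}`. -/
theorem macUp_add_lt (a b n : ℕ) (ha : 0 < a) (hb : 0 < b) (hn : 0 < n) :
    macUp n (a + b) < macUp n a + macUp n b := by
  obtain ⟨𝒜, h𝒜, h𝒜a, h𝒜s⟩ := exists_initSeg_macUp n a fun h => absurd h hn.ne'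
  obtain ⟨ℬ, hℬ, hℬb, hℬs⟩ := exists_initSeg_macUp n b fun h => absurd h hn.ne'
  obtain ⟨m, rfl⟩ : ∃ m, n = m + 1 := ⟨n - 1, by omega⟩
  obtain ⟨M, hM⟩ := exists_range_bound 𝒜
  -- `f` fixes `0, …, m - 1` and moves every other point out of the ground set of `𝒜`.
  let f : ℕ → ℕ := fun x => if x < m then x else x + M
  have hf : Function.Injective f := by
    intro x y hxy
    simp only [f] at hxy
    split_ifs at hxy <;> omega
  have hF : Function.Injective (image f) := image_injective hf
  have hcommon : ∀ {𝒞 : Finset (Finset ℕ)}, IsInitSeg 𝒞 (m + 1) → 𝒞.Nonempty →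
      range m ∈ ∂ 𝒞 := fun h hne =>
    mem_shadow_iff_insert_mem.2 ⟨m, by simp, by
      rw [← range_add_one]; exact range_mem_of_isInitSeg h hne⟩
  have hfix : (range m).image f = range m := by
    conv_rhs => rw [← image_id (s := range m)]
    exact image_congr fun x hx => if_pos (mem_range.1 (mem_coe.1 hx))
  have hdisj : Disjoint 𝒜 (ℬ.image (image f)) := by
    rw [disjoint_left]
    intro s hs hs'
    obtain ⟨t, ht, rfl⟩ := mem_image.1 hs'
    have hsub : t ⊆ range m := by
      intro x hx
      have hfx := mem_range.1 (hM _ hs (mem_image_of_mem f hx))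
      simp only [f] at hfx
      rw [mem_range]
      split_ifs at hfx <;> omega
    have h1 := card_le_card hsub
    rw [card_range, hℬ.1 (mem_coe.2 ht)] at h1
    omega
  have hcard : #(𝒜 ∪ ℬ.image (image f)) = a + b := by
    rw [card_union_of_disjoint hdisj, card_image_of_injective _ hF, h𝒜a, hℬb]
  have hsized : ((𝒜 ∪ ℬ.image (image f) : Finset (Finset ℕ)) : Set (Finset ℕ)).Sized (m + 1) := by
    intro s hs
    rcases mem_union.1 (mem_coe.1 hs) with hs | hs
    · exact h𝒜.1 (mem_coe.2 hs)
    · obtain ⟨t, ht, rfl⟩ := mem_image.1 hs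
      rw [card_image_of_injective _ hf]
      exact hℬ.1 (mem_coe.2 ht)
  have hshadow : ∂ (𝒜 ∪ ℬ.image (image f)) = ∂ 𝒜 ∪ (∂ ℬ).image (image f) := by
    rw [← shadow_image_image hf]
    exact sup_union
  have hinter : 0 < #(∂ 𝒜 ∩ (∂ ℬ).image (image f)) := by
    refine card_pos.2 ⟨range m, mem_inter.2 ⟨hcommon h𝒜 (card_pos.1 (by omega)), ?_⟩⟩
    exact mem_image.2 ⟨range m, hcommon hℬ (card_pos.1 (by omega)), hfix⟩
  have hunion := card_union_add_card_inter (∂ 𝒜) ((∂ ℬ).image (image f))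
  rw [card_image_of_injective _ hF] at hunion
  have hmain := macUp_le_of_sized hn hsized
  rw [hcard, hshadow] at hmain
  omega
end
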